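/- If F is a Kuratowski partition of a Baire space X (a partition of X into meager sets such that the union of every subfamily has the Baire property) and U is a nonempty open subset of X, then {F ∩ U : F ∈ F, F ∩ U ≠ ∅} is a Kuratowski partition of the subspace U. -/

import Mathlib

def HasBaireProperty {X : Type*} [TopologicalSpace X] (A : Set X) : Prop :=
  ∃ V M : Set X, IsOpen V ∧ IsMeagre M ∧ A = symmDiff V M

def IsKuratowskiPartition {X : Type*} [TopologicalSpace X] (F : Set (Set X)) : Prop :=
  (∀ A ∈ F, IsMeagre A) ∧ ⋃₀ F = Set.univ ∧
  (F.Pairwise fun A B => A ∩ B = ∅) ∧ ∀ G ⊆ F, HasBaireProperty (⋃₀ G)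

def IsKuratowskiFamily {X ι : Type*} [TopologicalSpace X] (F : ι → Set X) : Prop :=
  (∀ α, IsMeagre (F α)) ∧ (⋃ α, F α) = Set.univ ∧
  (Pairwise fun a b => F a ∩ F b = ∅) ∧ ∀ A : Set ι, HasBaireProperty (⋃ α ∈ A, F α)

def KIdeal {X ι : Type*} [TopologicalSpace X] (F : ι → Set X) : Set (Set ι) :=
  {A | IsMeagre (⋃ α ∈ A, F α)}

/-!
Preimages under a continuous open map send open sets to open sets and meagre sets to meagre sets,
and they commute with unions and symmetric differences; hence they preserve the Baire property and,
up to empty members, Kuratowski partitions. The inclusion of an open subspace is such a map.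
-/

section

variable {X Y : Type*} [TopologicalSpace X] [TopologicalSpace Y] {f : Y → X}

theorem HasBaireProperty.preimage {A : Set X} (hA : HasBaireProperty A) (hf : Continuous f)
    (hfo : IsOpenMap f) : HasBaireProperty (f ⁻¹' A) := by
  obtain ⟨V, M, hV, hM, rfl⟩ := hA
  exact ⟨f ⁻¹' V, f ⁻¹' M, hV.preimage hf, hM.preimage_of_isOpenMap hf hfo,
    Set.preimage_symmDiff V M⟩

theorem IsKuratowskiPartition.of_subset {F G : Set (Set X)} (hF : IsKuratowskiPartition F)
    (hGF : G ⊆ F) (hG : ⋃₀ G = Set.univ) : IsKuratowskiPartition G := by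
  obtain ⟨meagre, -, disjoint, baire⟩ := hF
  exact ⟨fun A hA => meagre A (hGF hA), hG, disjoint.mono hGF,
    fun H hHG => baire H (hHG.trans hGF)⟩

theorem IsKuratowskiPartition.image_preimage {F : Set (Set X)} (hF : IsKuratowskiPartition F)
    (hf : Continuous f) (hfo : IsOpenMap f) : IsKuratowskiPartition (Set.preimage f '' F) := by
  obtain ⟨meagre, cover, disjoint, baire⟩ := hF
  have sUnion_image_preimage (H : Set (Set X)) : ⋃₀ (Set.preimage f '' H) = f ⁻¹' ⋃₀ H := by
    rw [Set.sUnion_image, Set.preimage_sUnion]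
  refine ⟨?_, ?_, ?_, ?_⟩
  · rintro _ ⟨A, hA, rfl⟩
    exact (meagre A hA).preimage_of_isOpenMap hf hfo
  · rw [sUnion_image_preimage, cover, Set.preimage_univ]
  · rintro _ ⟨A, hA, rfl⟩ _ ⟨B, hB, rfl⟩ hne
    have hAB : A ∩ B = ∅ := disjoint hA hB (ne_of_apply_ne _ hne)
    rw [← Set.preimage_inter, hAB, Set.preimage_empty]
  · intro G hG
    obtain ⟨H, hHF, rfl⟩ := Set.subset_image_iff.mp hG
    rw [sUnion_image_preimage]
    exact (baire H hHF).preimage hf hfo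

theorem stmt_1_general {F : Set (Set X)} (hF : IsKuratowskiPartition F)
    (hf : Continuous f) (hfo : IsOpenMap f) :
    IsKuratowskiPartition {S : Set Y | S ≠ ∅ ∧ ∃ A ∈ F, S = f ⁻¹' A} := by
  have hpre := hF.image_preimage hf hfo
  have members_eq :
      {S : Set Y | S ≠ ∅ ∧ ∃ A ∈ F, S = f ⁻¹' A} = Set.preimage f '' F \ {∅} := by
    grind
  rw [members_eq]
  exact hpre.of_subset Set.sdiff_subset ((Set.sUnion_sdiff_singleton_empty _).trans hpre.2.1)

end

/-- A Kuratowski partition of a Baire space restricts to a Kuratowski partition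
of any nonempty open subspace. -/
theorem stmt_1 {X : Type*} [TopologicalSpace X] [BaireSpace X]
    (F : Set (Set X)) (hF : IsKuratowskiPartition F)
    (U : Set X) (hU : IsOpen U) (hne : U.Nonempty) :
    IsKuratowskiPartition {S : Set U | S ≠ ∅ ∧ ∃ A ∈ F, S = Subtype.val ⁻¹' A} :=
  stmt_1_general hF continuous_subtype_val hU.isOpenMap_subtype_val
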